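/- There exist real sequences (a_m)_{m≥1} and (a'_m)_{m≥1} such that for every integer M ≥ 1, as b → ∞, K(b,{0}) = b·log(b) + Σ_{m=1}^M a_m·b^{−m} + O(b^{−M−1}) and K(b,{b−1}) = b·log(b) + Σ_{m=1}^M a'_m·b^{−m} + O(b^{−M−1}); i.e., both K(b,{0}) − b·log(b) and K(b,{b−1}) − b·log(b) admit asymptotic expansions in descending powers of b to all orders. -/

import Mathlib

open MeasureTheory Real ENNReal

/-- The digamma function `ψ(x) = d/dx log Γ(x)`. -/
noncomputable def digamma (x : ℝ) : ℝ := deriv (fun y => Real.log (Real.Gamma y)) x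

/-- The Kempner sum `K(b,E)`: sum of reciprocals of positive integers whose
base-`b` digits all avoid the excluded set `E`. -/
noncomputable def kempnerSum (b : ℕ) (E : Finset ℕ) : ℝ :=
  ∑' n : ℕ, if n ≠ 0 ∧ ∀ d ∈ Nat.digits b n, d ∉ E then (n : ℝ)⁻¹ else 0

/-- The measure `μ_{b,E}` on `[0,1)`: the sum, over all finite strings of admissible
digits (digits `< b` not in `E`), of the weighted Dirac mass `b^{-l} δ_{n(X)/b^l}`. -/
noncomputable def kempnerMeasure (b : ℕ) (E : Finset ℕ) : Measure ℝ :=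
  Measure.sum (fun X : {l : List ℕ // ∀ d ∈ l, d < b ∧ d ∉ E} =>
    ((b : ℝ≥0∞) ^ X.1.length)⁻¹ •
      Measure.dirac (((Nat.ofDigits b X.1 : ℕ) : ℝ) / (b : ℝ) ^ X.1.length))

/-- `E₁ = E` if `0 ∉ E`, and `E₁ = (E ∪ {b}) \ {0}` if `0 ∈ E`. -/
def Eone (b : ℕ) (E : Finset ℕ) : Finset ℕ :=
  if 0 ∈ E then insert b (E.erase 0) else E

/-- `ζ(s) = ∑_{k ≥ 1} k⁻ˢ`. -/
noncomputable def zetaVal (s : ℕ) : ℝ := ∑' k : ℕ, (((k : ℝ) + 1) ^ s)⁻¹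

/-- `v_m(d) = ∫_{[0,1)} (d - x)^m dμ_{b,E}(x)`. -/
noncomputable def vMoment (b : ℕ) (E : Finset ℕ) (m : ℕ) (d : ℝ) : ℝ :=
  ∫ x in Set.Ico (0 : ℝ) 1, (d - x) ^ m ∂(kempnerMeasure b E)

open Filter Topology Asymptotics

/-- `F` has a polynomial approximation in `1/b` up to `O(b^{-N})`. -/
def HasExp (N : ℕ) (F : ℕ → ℝ) : Prop :=
  ∃ P : Polynomial ℝ, (fun b : ℕ => F b - P.eval ((b : ℝ)⁻¹)) =O[atTop]
    fun b : ℕ => ((b : ℝ)⁻¹) ^ N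

theorem inv_tendsto : Tendsto (fun b : ℕ => ((b : ℝ)⁻¹)) atTop (𝓝 0) :=
  tendsto_inv_atTop_nhds_zero_nat

theorem poly_isBigO_one (P : Polynomial ℝ) :
    (fun b : ℕ => P.eval ((b : ℝ)⁻¹)) =O[atTop] fun _ : ℕ => (1 : ℝ) := by
  have : Tendsto (fun b : ℕ => P.eval ((b : ℝ)⁻¹)) atTop (𝓝 (P.eval 0)) :=
    (P.continuous.tendsto 0).comp inv_tendsto
  exact this.isBigO_one ℝ

theorem pow_isBigO {M N : ℕ} (h : M ≤ N) :
    (fun b : ℕ => ((b : ℝ)⁻¹) ^ N) =O[atTop] fun b : ℕ => ((b : ℝ)⁻¹) ^ M := by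
  refine IsBigO.of_bound 1 ?_
  filter_upwards [eventually_ge_atTop 1] with b hb
  have hb' : (1 : ℝ) ≤ b := by exact_mod_cast hb
  have h1 : (b : ℝ)⁻¹ ≤ 1 := inv_le_one_of_one_le₀ hb'
  have h0 : 0 ≤ (b : ℝ)⁻¹ := by positivity
  rw [Real.norm_of_nonneg (by positivity), Real.norm_of_nonneg (by positivity), one_mul]
  exact pow_le_pow_of_le_one h0 h1 h

theorem HasExp.mono {M N : ℕ} {F : ℕ → ℝ} (h : HasExp N F) (hMN : M ≤ N) : HasExp M F := by
  obtain ⟨P, hP⟩ := h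
  exact ⟨P, hP.trans (pow_isBigO hMN)⟩

theorem HasExp.of_isBigO {N : ℕ} {F : ℕ → ℝ}
    (h : F =O[atTop] fun b : ℕ => ((b : ℝ)⁻¹) ^ N) : HasExp N F :=
  ⟨0, by simpa using h⟩

theorem HasExp.const (N : ℕ) (c : ℝ) : HasExp N (fun _ => c) :=
  ⟨Polynomial.C c, by simpa using isBigO_zero _ _⟩

theorem HasExp.add {N : ℕ} {F G : ℕ → ℝ} (hF : HasExp N F) (hG : HasExp N G) :
    HasExp N (fun b => F b + G b) := by
  obtain ⟨P, hP⟩ := hF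
  obtain ⟨Q, hQ⟩ := hG
  refine ⟨P + Q, (hP.add hQ).congr_left fun b => ?_⟩
  simp; ring

theorem HasExp.const_mul {N : ℕ} {F : ℕ → ℝ} (c : ℝ) (hF : HasExp N F) :
    HasExp N (fun b => c * F b) := by
  obtain ⟨P, hP⟩ := hF
  refine ⟨Polynomial.C c * P, (hP.const_mul_left c).congr_left fun b => ?_⟩
  simp; ring

theorem HasExp.sub {N : ℕ} {F G : ℕ → ℝ} (hF : HasExp N F) (hG : HasExp N G) :
    HasExp N (fun b => F b - G b) := by
  have := hF.add (hG.const_mul (-1))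
  simpa [sub_eq_add_neg] using this

theorem HasExp.sum {ι : Type*} {N : ℕ} (s : Finset ι) {F : ι → ℕ → ℝ}
    (h : ∀ i ∈ s, HasExp N (F i)) : HasExp N (fun b => ∑ i ∈ s, F i b) := by
  classical
  induction s using Finset.induction_on with
  | empty => simpa using HasExp.const N 0
  | insert a s ha ih =>
    simp only [Finset.sum_insert ha]
    exact (h a (by simp)).add (ih fun i hi => h i (by simp [hi]))

theorem HasExp.pow_mul {N : ℕ} {F : ℕ → ℝ} (k : ℕ) (hF : HasExp N F) :
    HasExp (N + k) (fun b => ((b : ℝ)⁻¹) ^ k * F b) := by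
  obtain ⟨P, hP⟩ := hF
  refine ⟨Polynomial.X ^ k * P, ?_⟩
  have := (isBigO_refl (fun b : ℕ => ((b : ℝ)⁻¹) ^ k) atTop).mul hP
  refine (this.congr_left fun b => ?_).congr_right fun b => ?_
  · simp only [Polynomial.eval_mul, Polynomial.eval_pow, Polynomial.eval_X]; ring
  · ring

theorem HasExp.congr {N : ℕ} {F G : ℕ → ℝ} (hF : HasExp N F) (h : F =ᶠ[atTop] G) :
    HasExp N G := by
  obtain ⟨P, hP⟩ := hF
  refine ⟨P, hP.congr' ?_ EventuallyEq.rfl⟩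
  filter_upwards [h] with b hb
  rw [hb]

theorem poly_coeff_zero (N : ℕ) : ∀ Q : Polynomial ℝ,
    ((fun b : ℕ => Q.eval ((b : ℝ)⁻¹)) =O[atTop] fun b : ℕ => ((b : ℝ)⁻¹) ^ N) →
    ∀ m < N, Q.coeff m = 0 := by
  induction N with
  | zero => intro Q _ m hm; omega
  | succ N ih =>
    intro Q hQ
    have h1 : Tendsto (fun b : ℕ => Q.eval ((b : ℝ)⁻¹)) atTop (𝓝 (Q.eval 0)) :=
      (Q.continuous.tendsto 0).comp inv_tendsto
    have h2 : Tendsto (fun b : ℕ => ((b : ℝ)⁻¹) ^ (N + 1)) atTop (𝓝 0) := by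
      simpa using inv_tendsto.pow (N + 1)
    have h3 := hQ.trans_tendsto h2
    have h0 : Q.coeff 0 = 0 := by
      rw [Polynomial.coeff_zero_eq_eval_zero]; exact tendsto_nhds_unique h1 h3
    have hdiv : ∀ x : ℝ, Q.eval x = x * Q.divX.eval x := by
      intro x
      conv_lhs => rw [← Polynomial.divX_mul_X_add Q]
      simp [h0]; ring
    have h4 := ih Q.divX (by
      have := (isBigO_refl (fun b : ℕ => ((b : ℝ))) atTop).mul hQ
      refine this.congr' ?_ ?_
      · filter_upwards [eventually_ge_atTop 1] with b hb
        have : (b : ℝ) ≠ 0 := by positivity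
        simp only [hdiv]; field_simp
      · filter_upwards [eventually_ge_atTop 1] with b hb
        have : (b : ℝ) ≠ 0 := by positivity
        rw [pow_succ]; field_simp)
    intro m hm
    rcases m with _ | m
    · exact h0
    · have := h4 m (by omega)
      rwa [Polynomial.coeff_divX] at this

theorem HasExp.full {G : ℕ → ℝ} (h : ∀ N, HasExp N G) :
    ∃ a : ℕ → ℝ, ∀ M : ℕ, (fun b : ℕ => G b - ∑ m ∈ Finset.range M, a m * ((b : ℝ)⁻¹) ^ m)
      =O[atTop] fun b : ℕ => ((b : ℝ)⁻¹) ^ M := by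
  choose P hP using h
  refine ⟨fun m => (P (m + 1)).coeff m, fun M => ?_⟩
  set T : Polynomial ℝ := ∑ m ∈ Finset.range M,
    Polynomial.C ((P (m + 1)).coeff m) * Polynomial.X ^ m with hT
  have hTe : ∀ x : ℝ, T.eval x = ∑ m ∈ Finset.range M, (P (m + 1)).coeff m * x ^ m := by
    intro x; simp [hT, Polynomial.eval_finsetSum]
  have hagree : ∀ m < M, (P M).coeff m = (P (m + 1)).coeff m := by
    intro m hm
    have h1 := ((hP (m + 1)).sub ((hP M).trans (pow_isBigO (show m + 1 ≤ M by omega))))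
    have := poly_coeff_zero (m + 1) (P M - P (m + 1)) (h1.congr_left fun b => by
      simp) m (by omega)
    rw [Polynomial.coeff_sub] at this
    linarith
  have hdvd : Polynomial.X ^ M ∣ P M - T := by
    rw [Polynomial.X_pow_dvd_iff]
    intro d hd
    rw [Polynomial.coeff_sub, hagree d hd, hT, Polynomial.finsetSum_coeff]
    simp [Polynomial.coeff_X_pow, hd]
  obtain ⟨R, hR⟩ := hdvd
  have h2 : (fun b : ℕ => (P M - T).eval ((b : ℝ)⁻¹)) =O[atTop]
      fun b : ℕ => ((b : ℝ)⁻¹) ^ M := by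
    have := (isBigO_refl (fun b : ℕ => ((b : ℝ)⁻¹) ^ M) atTop).mul (poly_isBigO_one R)
    refine (this.congr_left fun b => ?_).congr_right fun b => by simp
    rw [hR]; simp
  refine ((hP M).add h2).congr_left fun b => ?_
  rw [← hTe]; simp

/-- Polynomial approximation of analytic functions. -/
theorem analytic_poly {g : ℝ → ℝ} (hg : AnalyticAt ℝ g 0) (N : ℕ) :
    ∃ P : Polynomial ℝ, (fun x => g x - P.eval x) =O[𝓝 0] fun x : ℝ => x ^ N := by
  obtain ⟨p, hp⟩ := hg
  have h := hp.isBigO_sub_partialSum_pow N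
  refine ⟨∑ k ∈ Finset.range N, Polynomial.C (p.coeff k) * Polynomial.X ^ k, ?_⟩
  refine IsBigO.trans (h.congr_left fun x => ?_) ?_
  · simp only [FormalMultilinearSeries.partialSum, Polynomial.eval_finsetSum, zero_add,
      FormalMultilinearSeries.apply_eq_pow_smul_coeff, Polynomial.eval_mul, Polynomial.eval_C,
      Polynomial.eval_pow, Polynomial.eval_X, smul_eq_mul]
    congr 1
    exact Finset.sum_congr rfl fun k _ => mul_comm _ _
  · refine IsBigO.of_bound 1 (Eventually.of_forall fun x => ?_)
    simp

theorem analytic_div {f : ℝ → ℝ} (hf : AnalyticAt ℝ f 0) (h0 : f 0 = 0) :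
    ∃ g : ℝ → ℝ, AnalyticAt ℝ g 0 ∧ g 0 = deriv f 0 ∧ ∀ x, f x = x * g x := by
  refine ⟨dslope f 0, ?_, dslope_same f 0, fun x => ?_⟩
  · obtain ⟨p, hp⟩ := hf
    exact ⟨_, hp.has_fpower_series_dslope_fslope⟩
  · have := sub_smul_dslope f 0 x
    simp [h0] at this
    exact this.symm

theorem analytic_phi (j : ℕ) : ∃ g : ℝ → ℝ, AnalyticAt ℝ g 0 ∧ g 0 = j ∧
    ∀ x, 1 - ((1 + x)⁻¹) ^ j = x * g x := by
  have ha : AnalyticAt ℝ (fun x : ℝ => 1 - ((1 + x)⁻¹) ^ j) 0 := by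
    have : AnalyticAt ℝ (fun x : ℝ => (1 + x)⁻¹) 0 :=
      (analyticAt_const.add analyticAt_id).inv (by simp)
    exact analyticAt_const.sub (this.pow j)
  obtain ⟨g, h1, h2, h3⟩ := analytic_div ha (by simp)
  refine ⟨g, h1, ?_, h3⟩
  rw [h2]
  have hd : HasDerivAt (fun x : ℝ => (1 + x)⁻¹) (-1) 0 := by
    have := ((hasDerivAt_id (0:ℝ)).const_add 1).fun_inv (by simp)
    simpa using this
  have h := ((hd.fun_pow j).const_sub 1).deriv
  rw [h]
  simp

theorem analytic_log : ∃ g : ℝ → ℝ, AnalyticAt ℝ g 0 ∧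
    ∀ x, x - Real.log (1 + x) = x ^ 2 * g x := by
  have hl : AnalyticAt ℝ (fun x : ℝ => Real.log (1 + x)) 0 :=
    (analyticAt_const.add analyticAt_id).log (by simp)
  have ha : AnalyticAt ℝ (fun x : ℝ => x - Real.log (1 + x)) 0 := analyticAt_id.sub hl
  obtain ⟨g, h1, h2, h3⟩ := analytic_div ha (by simp)
  have h4 : g 0 = 0 := by
    rw [h2]
    have hd : HasDerivAt (fun x : ℝ => Real.log (1 + x)) 1 0 := by
      have := ((hasDerivAt_id (0:ℝ)).const_add 1).log (by simp)
      simpa using this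
    have := ((hasDerivAt_id' (0:ℝ)).fun_sub hd).deriv
    rw [this]; norm_num
  obtain ⟨g', h5, h6, h7⟩ := analytic_div h1 h4
  exact ⟨g', h5, fun x => by rw [h3, h7]; ring⟩

/-- Functions of the shape `n^{-k} g(1/n)` with `g` analytic at zero. -/
def FC (k : ℕ) (f : ℕ → ℝ) : Prop :=
  ∃ g : ℝ → ℝ, AnalyticAt ℝ g 0 ∧ ∀ᶠ n : ℕ in atTop, f n = ((n : ℝ)⁻¹) ^ k * g ((n : ℝ)⁻¹)

/-- The telescoping functions. -/
noncomputable def cfun (j : ℕ) (n : ℕ) : ℝ := ((n : ℝ)⁻¹) ^ j - (((n : ℝ) + 1)⁻¹) ^ j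

theorem cfun_eq (j : ℕ) : ∃ g : ℝ → ℝ, AnalyticAt ℝ g 0 ∧ g 0 = j ∧
    ∀ n : ℕ, 1 ≤ n → cfun j n = ((n : ℝ)⁻¹) ^ (j + 1) * g ((n : ℝ)⁻¹) := by
  obtain ⟨g, h1, h2, h3⟩ := analytic_phi j
  refine ⟨g, h1, h2, fun n hn => ?_⟩
  have hn' : (n : ℝ) ≠ 0 := by positivity
  rw [pow_succ, mul_assoc, ← h3, cfun, mul_sub, mul_one, ← mul_pow]
  congr 2
  field_simp

theorem FC.cfun (j : ℕ) : FC (j + 1) (cfun j) := by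
  obtain ⟨g, h1, _, h3⟩ := cfun_eq j
  exact ⟨g, h1, (eventually_ge_atTop 1).mono h3⟩

theorem FC.shift (i d : ℕ) : FC i (fun n => (((n : ℝ) + d)⁻¹) ^ i) := by
  refine ⟨fun x => ((1 + d * x)⁻¹) ^ i, ?_, ?_⟩
  · have : AnalyticAt ℝ (fun x : ℝ => (1 + d * x)⁻¹) 0 :=
      (analyticAt_const.add (analyticAt_const.mul analyticAt_id)).inv (by simp)
    exact this.pow i
  · filter_upwards [eventually_ge_atTop 1] with n hn
    have hn' : (n : ℝ) ≠ 0 := by positivity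
    rw [← mul_pow]
    congr 1
    field_simp

theorem FC.step {k : ℕ} (hk : 2 ≤ k) {f : ℕ → ℝ} (hf : FC k f) :
    ∃ α : ℝ, FC (k + 1) (fun n => f n - α * _root_.cfun (k - 1) n) := by
  obtain ⟨g, hg, hfg⟩ := hf
  obtain ⟨φ, h1, h2, h3⟩ := cfun_eq (k - 1)
  have hk1 : ((k - 1 : ℕ) : ℝ) ≠ 0 := by
    have : 0 < k - 1 := by omega
    positivity
  set α := g 0 / ((k - 1 : ℕ) : ℝ) with hα
  obtain ⟨ψ, h4, _, h6⟩ := analytic_div (f := fun x => g x - α * φ x)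
    (hg.sub (analyticAt_const.mul h1)) (by simp only [h2, hα]; field_simp; simp)
  refine ⟨α, ψ, h4, ?_⟩
  filter_upwards [hfg, eventually_ge_atTop 1] with n hn hn1
  have hkk : k - 1 + 1 = k := by omega
  rw [hn, h3 n hn1, hkk, pow_succ, mul_assoc, ← h6]
  ring

theorem FC.isBigO {k : ℕ} {f : ℕ → ℝ} (hf : FC k f) :
    f =O[atTop] fun n : ℕ => ((n : ℝ)⁻¹) ^ k := by
  obtain ⟨g, hg, hfg⟩ := hf
  have h1 : (fun n : ℕ => g ((n : ℝ)⁻¹)) =O[atTop] fun _ : ℕ => (1 : ℝ) :=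
    (hg.continuousAt.tendsto.comp inv_tendsto).isBigO_one ℝ
  have := (isBigO_refl (fun n : ℕ => ((n : ℝ)⁻¹) ^ k) atTop).mul h1
  refine this.congr' ?_ (Eventually.of_forall fun n => by simp)
  filter_upwards [hfg] with n hn using hn.symm

/-- Weighted sums. -/
noncomputable def SS (w : ℕ → ℕ → ℝ) (b : ℕ) (f : ℕ → ℝ) : ℝ := ∑' n, w b n * f n

/-- Weighted sums, shifted by `δ`, with the extra term `t 1` when `δ = 1`. -/
noncomputable def So (w : ℕ → ℕ → ℝ) (δ b : ℕ) (t : ℕ → ℝ) : ℝ :=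
  δ * t 1 + ∑' n, w b n * t (n + δ)

/-- The function which is summed at the excluded digit. -/
noncomputable def tf (ε : ℝ) (b : ℕ) (h : ℝ → ℝ) (m : ℕ) : ℝ :=
  ε * (h (b * m) - h (b * m + ε))

/-- The abstract properties of the indicator of admissible integers. -/
structure KW (w : ℕ → ℕ → ℝ) (δ : ℕ) (ε : ℝ) : Prop where
  hδ : (δ = 0 ∧ ε = 1) ∨ (δ = 1 ∧ ε = -1)
  zero : ∀ b, w b 0 = 0
  nonneg : ∀ b n, 0 ≤ w b n
  le_one : ∀ b n, w b n ≤ 1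
  one : ∀ b n, 1 ≤ n → n + 1 < b → w b n = 1
  ident : ∀ b, 2 ≤ b → ∀ h : ℝ → ℝ, ∀ L, 1 ≤ L →
    ∑ n ∈ Finset.range (b * L), w b n * (h n - h (n + 1)) =
      h 1 - h b + ∑ n ∈ Finset.range L, w b n * (h (b * n) - h (b * n + b))
        - (δ * tf ε b h 1 + ∑ n ∈ Finset.range L, w b n * tf ε b h (n + δ))

theorem summable_sq : Summable (fun n : ℕ => ((n : ℝ)⁻¹) ^ 2) := by
  simp [inv_pow]

theorem FC.summable {k : ℕ} (hk : 2 ≤ k) {f : ℕ → ℝ} (hf : FC k f) : Summable f :=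
  summable_of_isBigO_nat summable_sq (hf.isBigO.trans (pow_isBigO hk))

namespace KW

variable {w : ℕ → ℕ → ℝ} {δ : ℕ} {ε : ℝ}

theorem abs_mul_le (H : KW w δ ε) (b n : ℕ) (x : ℝ) : |w b n * x| ≤ |x| := by
  rw [abs_mul, abs_of_nonneg (H.nonneg b n)]
  exact mul_le_of_le_one_left (abs_nonneg _) (H.le_one b n)

theorem eps_sq (H : KW w δ ε) : ε * ε = 1 := by
  rcases H.hδ with ⟨_, h⟩ | ⟨_, h⟩ <;> rw [h] <;> norm_num

theorem eps_abs (H : KW w δ ε) : |ε| = 1 := by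
  rcases H.hδ with ⟨_, h⟩ | ⟨_, h⟩ <;> rw [h] <;> norm_num

theorem delta_le (H : KW w δ ε) : δ ≤ 1 := by
  rcases H.hδ with ⟨h, _⟩ | ⟨h, _⟩ <;> omega

theorem summable (H : KW w δ ε) (b : ℕ) {f : ℕ → ℝ} (hf : Summable f) :
    Summable (fun n => w b n * f n) :=
  Summable.of_norm_bounded hf.abs fun n => H.abs_mul_le b n (f n)

theorem congr_term (H : KW w δ ε) (b : ℕ) {f g : ℕ → ℝ} (h : ∀ n, 1 ≤ n → f n = g n) (n : ℕ) :
    w b n * f n = w b n * g n := by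
  rcases Nat.eq_zero_or_pos n with rfl | hn
  · simp [H.zero]
  · rw [h n hn]

theorem So_congr (H : KW w δ ε) (b : ℕ) {f g : ℕ → ℝ} (h : ∀ n, 1 ≤ n → f n = g n) :
    So w δ b f = So w δ b g := by
  unfold So
  rw [h 1 le_rfl, tsum_congr (H.congr_term b (f := fun n => f (n + δ)) (g := fun n => g (n + δ))
    fun n hn => h _ (by omega))]

theorem tsum_ident (H : KW w δ ε) (b : ℕ) (hb : 2 ≤ b) (h : ℝ → ℝ)
    (hA : Summable fun n : ℕ => w b n * (h n - h (n + 1)))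
    (hB : Summable fun n : ℕ => w b n * (h (b * n) - h (b * n + b)))
    (hD : Summable fun n : ℕ => w b n * tf ε b h (n + δ)) :
    ∑' n : ℕ, w b n * (h n - h (n + 1)) = h 1 - h b +
      ∑' n : ℕ, w b n * (h (b * n) - h (b * n + b)) - So w δ b (tf ε b h) := by
  have hL : Tendsto (fun L : ℕ => b * L) atTop atTop :=
    tendsto_id.const_mul_atTop' (by omega)
  have h1 := hA.hasSum.tendsto_sum_nat.comp hL
  have h2 := (hB.hasSum.tendsto_sum_nat.const_add (h 1 - h b)).sub
    (hD.hasSum.tendsto_sum_nat.const_add (δ * tf ε b h 1))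
  refine tendsto_nhds_unique h1 (h2.congr' ?_)
  filter_upwards [eventually_ge_atTop 1] with L hL1
  exact (H.ident b hb h L hL1).symm

/-- Boundedness of the shifted sums. -/
theorem So_summable (H : KW w δ ε) (b : ℕ) {t : ℕ → ℝ} {K : ℝ}
    (ht : ∀ m : ℕ, 1 ≤ m → |t m| ≤ K * ((m : ℝ)⁻¹) ^ 2) :
    Summable (fun n => w b n * t (n + δ)) ∧
    |So w δ b t| ≤ K * (1 + ∑' n : ℕ, ((n : ℝ)⁻¹) ^ 2) := by
  have hK : 0 ≤ K := by
    have := (abs_nonneg _).trans (ht 1 le_rfl)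
    simpa using this
  have hb : ∀ n : ℕ, ‖w b n * t (n + δ)‖ ≤ K * ((n : ℝ)⁻¹) ^ 2 := by
    intro n
    rcases Nat.eq_zero_or_pos n with rfl | hn
    · simp [H.zero]
    · refine (H.abs_mul_le b n _).trans ((ht _ (by omega)).trans ?_)
      have : (0 : ℝ) < n := by exact_mod_cast hn
      have h2 : (n : ℝ) ≤ ((n + δ : ℕ) : ℝ) := by exact_mod_cast Nat.le_add_right n δ
      gcongr
  have hs := summable_sq.mul_left K
  refine ⟨Summable.of_norm_bounded hs hb, ?_⟩
  have h1 := tsum_of_norm_bounded hs.hasSum hb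
  rw [tsum_mul_left, Real.norm_eq_abs] at h1
  have h2 : |(δ : ℝ) * t 1| ≤ K := by
    have h3 := ht 1 le_rfl
    have h4 : (δ : ℝ) ≤ 1 := by exact_mod_cast H.delta_le
    rw [abs_mul, abs_of_nonneg (by positivity)]
    simp at h3
    calc (δ : ℝ) * |t 1| ≤ 1 * K := by gcongr
      _ = K := one_mul _
  unfold So
  calc _ ≤ |(δ : ℝ) * t 1| + _ := abs_add_le _ _
    _ ≤ K + K * ∑' n : ℕ, ((n : ℝ)⁻¹) ^ 2 := add_le_add h2 h1
    _ = _ := by ring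

theorem So_pow_summable (H : KW w δ ε) (b : ℕ) {k : ℕ} (hk : 2 ≤ k) :
    Summable (fun n => w b n * (fun m : ℕ => ((m : ℝ)⁻¹) ^ k) (n + δ)) := by
  refine (H.So_summable b (K := 1) (t := fun m : ℕ => ((m : ℝ)⁻¹) ^ k) fun m hm => ?_).1
  have : (1 : ℝ) ≤ m := by exact_mod_cast hm
  rw [abs_of_nonneg (by positivity), one_mul]
  exact pow_le_pow_of_le_one (by positivity) (inv_le_one_of_one_le₀ this) hk

theorem So_sub (b : ℕ) {s t : ℕ → ℝ} (hs : Summable (fun n => w b n * s (n + δ)))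
    (ht : Summable (fun n => w b n * t (n + δ))) :
    So w δ b (fun m => s m - t m) = So w δ b s - So w δ b t := by
  unfold So
  simp only [mul_sub]
  rw [hs.tsum_sub ht]; ring

theorem So_const_mul (b : ℕ) (c : ℝ) (t : ℕ → ℝ) :
    So w δ b (fun m => c * t m) = c * So w δ b t := by
  unfold So
  simp only [mul_left_comm _ c]
  rw [tsum_mul_left]; ring

theorem So_sum {ι : Type*} (b : ℕ) (s : Finset ι) (t : ι → ℕ → ℝ)
    (ht : ∀ i ∈ s, Summable (fun n => w b n * t i (n + δ))) :
    So w δ b (fun m => ∑ i ∈ s, t i m) = ∑ i ∈ s, So w δ b (t i) := by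
  unfold So
  simp only [Finset.mul_sum]
  rw [Summable.tsum_finsetSum ht, Finset.sum_add_distrib]

theorem So_decomp {ι : Type*} (b : ℕ) (s : Finset ι) (t : ι → ℕ → ℝ) (f r : ℕ → ℝ)
    (hr : Summable (fun n => w b n * r (n + δ)))
    (ht : ∀ i ∈ s, Summable (fun n => w b n * t i (n + δ)))
    (h : ∀ m, f m = ∑ i ∈ s, t i m + r m) :
    So w δ b f = ∑ i ∈ s, So w δ b (t i) + So w δ b r := by
  rw [← So_sum b s t ht]
  have h2 : Summable fun n => w b n * ∑ i ∈ s, t i (n + δ) := by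
    simp only [Finset.mul_sum]
    exact summable_sum ht
  unfold So
  simp only [h, mul_add]
  rw [h2.tsum_add hr]; ring

/-- Expansion of `∑ m^{-k} φ(ε/(b m))`. -/
theorem taylor (H : KW w δ ε) (N : ℕ)
    (hA : ∀ i, 2 ≤ i → HasExp N (fun b => So w δ b (fun m => ((m : ℝ)⁻¹) ^ i)))
    {k : ℕ} (hk : 2 ≤ k) {φ : ℝ → ℝ} (hφ : AnalyticAt ℝ φ 0) :
    HasExp N (fun b => So w δ b (fun m => ((m : ℝ)⁻¹) ^ k * φ (ε * (b : ℝ)⁻¹ * (m : ℝ)⁻¹))) := by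
  obtain ⟨P, hP⟩ := analytic_poly hφ N
  obtain ⟨C, hC⟩ := hP.bound
  obtain ⟨r, hr, hball⟩ := Metric.eventually_nhds_iff.mp hC
  have hmain : HasExp N (fun b => ∑ i ∈ Finset.range (P.natDegree + 1),
      (P.coeff i * ε ^ i) * (((b : ℝ)⁻¹) ^ i * So w δ b (fun m => ((m : ℝ)⁻¹) ^ (k + i)))) := by
    refine HasExp.sum _ fun i _ => HasExp.const_mul _ ?_
    exact ((hA (k + i) (by omega)).pow_mul i).mono (by omega)
  have hrem : HasExp N (fun b => So w δ b (fun m => ((m : ℝ)⁻¹) ^ k *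
      (φ (ε * (b : ℝ)⁻¹ * (m : ℝ)⁻¹) - P.eval (ε * (b : ℝ)⁻¹ * (m : ℝ)⁻¹)))) ∧
      ∀ᶠ b : ℕ in atTop, Summable (fun n => w b n * (fun m : ℕ => ((m : ℝ)⁻¹) ^ k *
      (φ (ε * (b : ℝ)⁻¹ * (m : ℝ)⁻¹) - P.eval (ε * (b : ℝ)⁻¹ * (m : ℝ)⁻¹))) (n + δ)) := by
    have hbd : ∀ᶠ b : ℕ in atTop, ∀ m : ℕ, 1 ≤ m → |((m : ℝ)⁻¹) ^ k *
      (φ (ε * (b : ℝ)⁻¹ * (m : ℝ)⁻¹) - P.eval (ε * (b : ℝ)⁻¹ * (m : ℝ)⁻¹))| ≤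
        (|C| * ((b : ℝ)⁻¹) ^ N) * ((m : ℝ)⁻¹) ^ 2 := by
      filter_upwards [inv_tendsto.eventually (gt_mem_nhds hr)] with b hb m hm
      have hm1 : (1 : ℝ) ≤ m := by exact_mod_cast hm
      have hm2 : (m : ℝ)⁻¹ ≤ 1 := inv_le_one_of_one_le₀ hm1
      have hb0 : 0 ≤ (b : ℝ)⁻¹ := by positivity
      have hm0 : 0 ≤ (m : ℝ)⁻¹ := by positivity
      have habs : |ε * (b : ℝ)⁻¹ * (m : ℝ)⁻¹| = (b : ℝ)⁻¹ * (m : ℝ)⁻¹ := by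
        rw [abs_mul, abs_mul, H.eps_abs, one_mul, abs_of_nonneg hb0, abs_of_nonneg hm0]
      have hx : |ε * (b : ℝ)⁻¹ * (m : ℝ)⁻¹| ≤ (b : ℝ)⁻¹ := by
        rw [habs]; exact mul_le_of_le_one_right hb0 hm2
      have h1 := hball (y := ε * (b : ℝ)⁻¹ * (m : ℝ)⁻¹) (by
        rw [Real.dist_eq, sub_zero]; linarith)
      rw [Real.norm_eq_abs, Real.norm_eq_abs, abs_pow] at h1
      rw [abs_mul, abs_of_nonneg (by positivity)]
      calc _ ≤ ((m : ℝ)⁻¹) ^ 2 * (|C| * ((b : ℝ)⁻¹) ^ N) := by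
            refine mul_le_mul (pow_le_pow_of_le_one hm0 hm2 hk) (h1.trans ?_)
              (abs_nonneg _) (by positivity)
            refine mul_le_mul (le_abs_self C) ?_ (by positivity) (abs_nonneg _)
            exact pow_le_pow_left₀ (abs_nonneg _) hx N
        _ = _ := by ring
    constructor
    · refine HasExp.of_isBigO (IsBigO.of_bound (|C| * (1 + ∑' n : ℕ, ((n : ℝ)⁻¹) ^ 2)) ?_)
      filter_upwards [hbd] with b hb
      have := (H.So_summable b (t := fun m : ℕ => ((m : ℝ)⁻¹) ^ k *
        (φ (ε * (b : ℝ)⁻¹ * (m : ℝ)⁻¹) - P.eval (ε * (b : ℝ)⁻¹ * (m : ℝ)⁻¹))) hb).2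
      rw [Real.norm_eq_abs, Real.norm_of_nonneg (by positivity)]
      refine this.trans (le_of_eq ?_)
      ring
    · filter_upwards [hbd] with b hb
      exact (H.So_summable b (t := fun m : ℕ => ((m : ℝ)⁻¹) ^ k *
        (φ (ε * (b : ℝ)⁻¹ * (m : ℝ)⁻¹) - P.eval (ε * (b : ℝ)⁻¹ * (m : ℝ)⁻¹))) hb).1
  refine (hmain.add hrem.1).congr ?_
  filter_upwards [hrem.2] with b hs
  have e1 : ∀ i, (P.coeff i * ε ^ i) * (((b : ℝ)⁻¹) ^ i *
      So w δ b (fun m => ((m : ℝ)⁻¹) ^ (k + i))) =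
      So w δ b (fun m => (P.coeff i * ε ^ i * ((b : ℝ)⁻¹) ^ i) * ((m : ℝ)⁻¹) ^ (k + i)) := by
    intro i
    rw [So_const_mul]; ring
  have hsi : ∀ i ∈ Finset.range (P.natDegree + 1), Summable (fun n => w b n *
      (fun i m : ℕ => (P.coeff i * ε ^ i * ((b : ℝ)⁻¹) ^ i) * ((m : ℝ)⁻¹) ^ (k + i)) i
        (n + δ)) := by
    intro i _
    have := (H.So_pow_summable b (k := k + i) (by omega)).mul_left
      (P.coeff i * ε ^ i * ((b : ℝ)⁻¹) ^ i)
    refine this.congr fun n => ?_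
    exact mul_left_comm _ _ _
  rw [Finset.sum_congr rfl fun i _ => e1 i]
  refine (So_decomp b (Finset.range (P.natDegree + 1)) (fun i m : ℕ => (P.coeff i * ε ^ i *
    ((b : ℝ)⁻¹) ^ i) * ((m : ℝ)⁻¹) ^ (k + i))
    (fun m => ((m : ℝ)⁻¹) ^ k * φ (ε * (b : ℝ)⁻¹ * (m : ℝ)⁻¹))
    (fun m => ((m : ℝ)⁻¹) ^ k *
      (φ (ε * (b : ℝ)⁻¹ * (m : ℝ)⁻¹) - P.eval (ε * (b : ℝ)⁻¹ * (m : ℝ)⁻¹)))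
    hs hsi fun m => ?_).symm
  have hev : ∑ i ∈ Finset.range (P.natDegree + 1),
      (P.coeff i * ε ^ i * ((b : ℝ)⁻¹) ^ i) * ((m : ℝ)⁻¹) ^ (k + i) =
      ((m : ℝ)⁻¹) ^ k * P.eval (ε * (b : ℝ)⁻¹ * (m : ℝ)⁻¹) := by
    rw [Polynomial.eval_eq_sum_range, Finset.mul_sum]
    refine Finset.sum_congr rfl fun i _ => ?_
    ring
  rw [hev]; ring

end KW

namespace KW

variable {w : ℕ → ℕ → ℝ} {δ : ℕ} {ε : ℝ}

theorem SS_bdd (H : KW w δ ε) {f : ℕ → ℝ} (hf : Summable f) :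
    HasExp 0 (fun b => SS w b f) := by
  refine HasExp.of_isBigO (IsBigO.of_bound (∑' n, |f n|) (Eventually.of_forall fun b => ?_))
  have := tsum_of_norm_bounded (f := fun n => w b n * f n) hf.abs.hasSum
    fun n => H.abs_mul_le b n (f n)
  simpa [SS] using this

theorem SS_tail (H : KW w δ ε) {k : ℕ} (hk : 2 ≤ k) {f : ℕ → ℝ} (hf : FC k f) :
    HasExp (k - 2) (fun b => SS w b f) := by
  have hfs := hf.summable hk
  obtain ⟨K, hK⟩ := hf.isBigO.bound
  set f0 : ℕ → ℝ := fun n => if n = 0 then 0 else f n with hf0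
  have hf0s : Summable f0 := by
    refine Summable.of_norm_bounded hfs.abs fun n => ?_
    simp only [hf0]; split_ifs <;> simp
  have hbd : ∀ᶠ b : ℕ in atTop, |SS w b f - ∑' n, f0 n| ≤
      (|K| * 2 ^ (k - 2) * ∑' n : ℕ, ((n : ℝ)⁻¹) ^ 2) * ((b : ℝ)⁻¹) ^ (k - 2) := by
    obtain ⟨n0, hn0⟩ := eventually_atTop.mp hK
    filter_upwards [eventually_ge_atTop (n0 + 2)] with b hb
    have hb0 : (0 : ℝ) < b := by have : 0 < b := by omega
                                 exact_mod_cast this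
    have hterm : ∀ n, ‖w b n * f n - f0 n‖ ≤
        (|K| * 2 ^ (k - 2) * ((b : ℝ)⁻¹) ^ (k - 2)) * ((n : ℝ)⁻¹) ^ 2 := by
      intro n
      rcases Nat.eq_zero_or_pos n with rfl | hn
      · simp [hf0, H.zero]
      · have hn' : n ≠ 0 := by omega
        simp only [hf0, hn', if_false]
        by_cases hnb : n + 1 < b
        · rw [H.one b n hn hnb]; simp; positivity
        · have h1 := hn0 n (by omega)
          have hnpos : (0 : ℝ) < n := by exact_mod_cast hn
          have h2 : (n : ℝ)⁻¹ ≤ 2 * (b : ℝ)⁻¹ := by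
            rw [← div_eq_mul_inv, inv_le_comm₀ hnpos (by positivity), inv_div]
            have : (b : ℝ) ≤ n + 1 := by exact_mod_cast not_lt.mp hnb
            have h3 : (1 : ℝ) ≤ n := by exact_mod_cast hn
            linarith
          have h3 : |w b n * f n - f n| ≤ |f n| := by
            have : w b n * f n - f n = -((1 - w b n) * f n) := by ring
            rw [this, abs_neg, abs_mul]
            have h4 := H.nonneg b n
            have h5 := H.le_one b n
            refine mul_le_of_le_one_left (abs_nonneg _) ?_
            rw [abs_le]; constructor <;> linarith
          rw [Real.norm_eq_abs, Real.norm_of_nonneg (by positivity)] at h1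
          calc _ ≤ |f n| := h3
            _ ≤ |K| * ((n : ℝ)⁻¹) ^ k := h1.trans (by gcongr; exact le_abs_self K)
            _ = |K| * (((n : ℝ)⁻¹) ^ (k - 2) * ((n : ℝ)⁻¹) ^ 2) := by
                rw [← pow_add, Nat.sub_add_cancel hk]
            _ ≤ |K| * ((2 * (b : ℝ)⁻¹) ^ (k - 2) * ((n : ℝ)⁻¹) ^ 2) := by gcongr
            _ = _ := by rw [mul_pow]; ring
    have hs := summable_sq.mul_left (|K| * 2 ^ (k - 2) * ((b : ℝ)⁻¹) ^ (k - 2))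
    have h1 := tsum_of_norm_bounded hs.hasSum hterm
    rw [(H.summable b hfs).tsum_sub hf0s, tsum_mul_left, Real.norm_eq_abs] at h1
    refine h1.trans (le_of_eq ?_)
    ring
  have h1 : HasExp (k - 2) (fun b => SS w b f - ∑' n, f0 n) := by
    refine HasExp.of_isBigO (IsBigO.of_bound
      (|K| * 2 ^ (k - 2) * ∑' n : ℕ, ((n : ℝ)⁻¹) ^ 2) ?_)
    filter_upwards [hbd] with b hb
    rw [Real.norm_eq_abs, Real.norm_of_nonneg (by positivity)]
    exact hb
  simpa using h1.add (HasExp.const (k - 2) (∑' n, f0 n))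

theorem tf_summable (H : KW w δ ε) {j : ℕ} (hj : 1 ≤ j) (b : ℕ) (hb : 2 ≤ b) :
    Summable fun n : ℕ => w b n * tf ε b (fun x => (x⁻¹) ^ j) (n + δ) := by
  have hc : Summable (cfun j) := (FC.cfun j).summable (by omega)
  refine H.summable b (f := fun n => tf ε b (fun x => (x⁻¹) ^ j) (n + δ)) ?_
  rcases H.hδ with ⟨h1, h2⟩ | ⟨h1, h2⟩
  · subst h1 h2
    have hi : Function.Injective (fun n : ℕ => b * n) := fun x y hxy => by
      simpa [show b ≠ 0 by omega] using hxy
    refine (hc.comp_injective hi).congr fun n => ?_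
    simp [tf, cfun]
  · subst h1 h2
    have hi : Function.Injective (fun n : ℕ => b * n + (b - 1)) := fun x y hxy => by
      simpa [show b ≠ 0 by omega] using hxy
    refine (hc.comp_injective hi).congr fun n => ?_
    have e1 : ((b * n + (b - 1) : ℕ) : ℝ) = b * n + (b - 1) := by
      push_cast [Nat.cast_sub (show 1 ≤ b by omega)]; ring
    simp only [tf, cfun, Function.comp, e1]
    push_cast
    rw [show (b : ℝ) * n + (b - 1) + 1 = b * (n + 1) by ring,
      show (b : ℝ) * n + (b - 1) = b * (n + 1) + -1 by ring]
    ring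

theorem C_ident (H : KW w δ ε) {j : ℕ} (hj : 1 ≤ j) {φ : ℝ → ℝ}
    (hφ : ∀ x, 1 - ((1 + x)⁻¹) ^ j = x * φ x) (b : ℕ) (hb : 2 ≤ b) :
    SS w b (cfun j) = 1 + ((b : ℝ)⁻¹) ^ j * (SS w b (cfun j) - 1)
      - ((b : ℝ)⁻¹) ^ (j + 1) *
        So w δ b (fun m => ((m : ℝ)⁻¹) ^ (j + 1) * φ (ε * (b : ℝ)⁻¹ * (m : ℝ)⁻¹)) := by
  have hb0 : (b : ℝ) ≠ 0 := by positivity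
  have hc : Summable (cfun j) := (FC.cfun j).summable (by omega)
  have eB : ∀ n : ℕ, w b n * ((((b : ℝ) * n)⁻¹) ^ j - (((b : ℝ) * n + b)⁻¹) ^ j) =
      ((b : ℝ)⁻¹) ^ j * (w b n * cfun j n) := by
    intro n
    rw [cfun, show (b : ℝ) * n + b = b * (n + 1) by ring, mul_inv, mul_inv, mul_pow, mul_pow]
    ring
  have hS := H.summable b hc
  have h := H.tsum_ident b hb (fun x => (x⁻¹) ^ j) hS
    ((hS.mul_left (((b : ℝ)⁻¹) ^ j)).congr fun n => (eB n).symm) (H.tf_summable hj b hb)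
  have e2 : So w δ b (tf ε b (fun x => (x⁻¹) ^ j)) = ((b : ℝ)⁻¹) ^ (j + 1) *
        So w δ b (fun m => ((m : ℝ)⁻¹) ^ (j + 1) * φ (ε * (b : ℝ)⁻¹ * (m : ℝ)⁻¹)) := by
    rw [← So_const_mul]
    refine H.So_congr b fun m hm => ?_
    have hm0 : (m : ℝ) ≠ 0 := by positivity
    have e3 : ((b : ℝ) * m + ε)⁻¹ = (b : ℝ)⁻¹ * (m : ℝ)⁻¹ *
        (1 + ε * (b : ℝ)⁻¹ * (m : ℝ)⁻¹)⁻¹ := by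
      rw [← mul_inv, ← mul_inv]
      congr 1
      field_simp
    have e4 := hφ (ε * (b : ℝ)⁻¹ * (m : ℝ)⁻¹)
    have e5 := H.eps_sq
    simp only [tf, e3, mul_inv, mul_pow, pow_succ]
    calc _ = ε * (((b : ℝ)⁻¹) ^ j * ((m : ℝ)⁻¹) ^ j) *
          (1 - ((1 + ε * (b : ℝ)⁻¹ * (m : ℝ)⁻¹)⁻¹) ^ j) := by ring
      _ = (ε * ε) * (((b : ℝ)⁻¹) ^ j * ((m : ℝ)⁻¹) ^ j) * ((b : ℝ)⁻¹ * (m : ℝ)⁻¹ *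
          φ (ε * (b : ℝ)⁻¹ * (m : ℝ)⁻¹)) := by rw [e4]; ring
      _ = _ := by rw [e5]; ring
  rw [e2] at h
  simp only [eB] at h
  rw [tsum_mul_left] at h
  simp only [inv_one, one_pow] at h
  have h' : SS w b (cfun j) = 1 - ((b : ℝ)⁻¹) ^ j + ((b : ℝ)⁻¹) ^ j * SS w b (cfun j)
      - ((b : ℝ)⁻¹) ^ (j + 1) *
        So w δ b (fun m => ((m : ℝ)⁻¹) ^ (j + 1) * φ (ε * (b : ℝ)⁻¹ * (m : ℝ)⁻¹)) := h
  rw [mul_sub, mul_one]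
  linarith

theorem hasExp_A (_ : KW w δ ε) {N : ℕ}
    (hQ : ∀ k, 2 ≤ k → ∀ f, FC k f → HasExp N (fun b => SS w b f)) (i : ℕ) (hi : 2 ≤ i) :
    HasExp N (fun b => So w δ b (fun m => ((m : ℝ)⁻¹) ^ i)) := by
  have := (HasExp.const N (δ : ℝ)).add (hQ i hi _ (FC.shift i δ))
  refine this.congr (Eventually.of_forall fun b => ?_)
  simp [So, SS]

theorem main (H : KW w δ ε) (N : ℕ) :
    ∀ k, 2 ≤ k → ∀ f, FC k f → HasExp N (fun b => SS w b f) := by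
  induction N with
  | zero => exact fun k hk f hf => H.SS_bdd (hf.summable hk)
  | succ N ih =>
    have hA := H.hasExp_A ih
    have hC : ∀ j, 1 ≤ j → HasExp (N + 1) (fun b => SS w b (cfun j)) := by
      intro j hj
      obtain ⟨φ, h1, _, h3⟩ := analytic_phi j
      have hT := H.taylor N hA (k := j + 1) (by omega) h1
      have h4 := ((ih (j + 1) (by omega) _ (FC.cfun j)).sub (HasExp.const N 1)).pow_mul j
      have h5 := hT.pow_mul (j + 1)
      have h6 := ((HasExp.const (N + 1) 1).add (h4.mono (by omega))).sub (h5.mono (by omega))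
      refine h6.congr ?_
      filter_upwards [eventually_ge_atTop 2] with b hb
      exact (H.C_ident hj h3 b hb).symm
    have hD : ∀ d k : ℕ, 2 ≤ k → N + 3 ≤ k + d → ∀ f, FC k f →
        HasExp (N + 1) (fun b => SS w b f) := by
      intro d
      induction d with
      | zero => exact fun k hk hkd f hf => (H.SS_tail hk hf).mono (by omega)
      | succ d ihd =>
        intro k hk hkd f hf
        obtain ⟨α, hα⟩ := hf.step hk
        have h1 := ihd (k + 1) (by omega) (by omega) _ hα
        have h2 := h1.add ((hC (k - 1) (by omega)).const_mul α)
        refine h2.congr (Eventually.of_forall fun b => ?_)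
        have hs1 := H.summable b (hα.summable (by omega))
        have hs2 := (H.summable b ((FC.cfun (k - 1)).summable (by omega))).mul_left α
        simp only [SS]
        rw [← tsum_mul_left, ← hs1.tsum_add hs2]
        refine tsum_congr fun n => ?_
        ring
    exact fun k hk f hf => hD (N + 3) k hk (by omega) f hf

end KW

namespace KW

variable {w : ℕ → ℕ → ℝ} {δ : ℕ} {ε : ℝ}

theorem log_sub_ge {x y : ℝ} (hx : 0 < x) (hy : 0 < y) : (y - x) / y ≤ Real.log y - Real.log x := by
  have := Real.log_le_sub_one_of_pos (div_pos hx hy)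
  rw [Real.log_div hx.ne' hy.ne'] at this
  rw [sub_div, div_self hy.ne']
  linarith

theorem tf_log_ge (H : KW w δ ε) {b m : ℕ} (hb : 2 ≤ b) (hm : 1 ≤ m) :
    1 / ((b : ℝ) * m + 1) ≤ tf ε b (fun x => -Real.log x) m := by
  have hb' : (2 : ℝ) ≤ b := by exact_mod_cast hb
  have hm' : (1 : ℝ) ≤ m := by exact_mod_cast hm
  have hbm : (2 : ℝ) ≤ b * m := by nlinarith
  rcases H.hδ with ⟨h1, h2⟩ | ⟨h1, h2⟩
  · have := log_sub_ge (x := (b : ℝ) * m) (y := (b : ℝ) * m + 1) (by linarith) (by linarith)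
    simp only [tf, h2]
    rw [add_sub_cancel_left] at this
    linarith
  · have := log_sub_ge (x := (b : ℝ) * m + -1) (y := (b : ℝ) * m) (by linarith) (by linarith)
    simp only [tf, h2]
    rw [show (b : ℝ) * m - (b * m + -1) = 1 by ring] at this
    have h3 : 1 / ((b : ℝ) * m + 1) ≤ 1 / (b * m) := by
      apply one_div_le_one_div_of_le <;> linarith
    linarith

theorem log_summable (H : KW w δ ε) {b : ℕ} (hb : 2 ≤ b) :
    Summable fun n : ℕ => w b n * tf ε b (fun x => -Real.log x) (n + δ) := by
  have hb' : (2 : ℝ) ≤ b := by exact_mod_cast hb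
  have hnn : ∀ n, 0 ≤ w b n * tf ε b (fun x => -Real.log x) (n + δ) := by
    intro n
    rcases Nat.eq_zero_or_pos n with rfl | hn
    · simp [H.zero]
    · exact mul_nonneg (H.nonneg b n) (le_trans (by positivity)
        (H.tf_log_ge hb (show 1 ≤ n + δ by omega)))
  refine summable_of_sum_range_le (c := Real.log b) hnn fun L => ?_
  rcases Nat.eq_zero_or_pos L with rfl | hL
  · simpa using Real.log_nonneg (by linarith)
  have h := H.ident b hb (fun x => -Real.log x) L hL
  have e1 : ∀ n : ℕ, w b n * (-Real.log (b * n) - -Real.log (b * n + b)) =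
      w b n * (-Real.log n - -Real.log (n + 1)) := by
    refine H.congr_term b fun n hn => ?_
    have hn' : (n : ℝ) ≠ 0 := by positivity
    have hn1 : (n : ℝ) + 1 ≠ 0 := by positivity
    have hb0 : (b : ℝ) ≠ 0 := by positivity
    rw [show (b : ℝ) * n + b = b * (n + 1) by ring, Real.log_mul hb0 hn', Real.log_mul hb0 hn1]
    ring
  have h2 : ∑ n ∈ Finset.range L, w b n * (-Real.log (b * n) - -Real.log (b * n + b)) ≤
      ∑ n ∈ Finset.range (b * L), w b n * (-Real.log n - -Real.log (n + 1)) := by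
    simp only [e1]
    refine Finset.sum_le_sum_of_subset_of_nonneg ?_ fun n _ _ => ?_
    · exact Finset.range_mono (Nat.le_mul_of_pos_left L (by omega))
    · rcases Nat.eq_zero_or_pos n with rfl | hn
      · simp [H.zero]
      · have hn' : (0 : ℝ) < n := by exact_mod_cast hn
        refine mul_nonneg (H.nonneg b n) ?_
        have := Real.log_le_log hn' (show (n : ℝ) ≤ n + 1 by linarith)
        linarith
  have h3 : 0 ≤ (δ : ℝ) * tf ε b (fun x => -Real.log x) 1 :=
    mul_nonneg (by positivity) (le_trans (by positivity) (H.tf_log_ge hb le_rfl))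
  simp only [Real.log_one] at h
  linarith

theorem inv_summable (H : KW w δ ε) {b : ℕ} (hb : 2 ≤ b) :
    Summable fun n : ℕ => w b n * (n : ℝ)⁻¹ := by
  have hb' : (2 : ℝ) ≤ b := by exact_mod_cast hb
  refine Summable.of_nonneg_of_le (fun n => mul_nonneg (H.nonneg b n) (by positivity))
    (fun n => ?_) ((H.log_summable hb).mul_left (4 * (b : ℝ)))
  rcases Nat.eq_zero_or_pos n with rfl | hn
  · simp [H.zero]
  · have h1 := H.tf_log_ge hb (show 1 ≤ n + δ by omega)
    have hn' : (1 : ℝ) ≤ n := by exact_mod_cast hn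
    have hd : (δ : ℝ) ≤ 1 := by exact_mod_cast H.delta_le
    have h2 : (n : ℝ)⁻¹ ≤ 4 * b * (1 / ((b : ℝ) * ((n + δ : ℕ) : ℝ) + 1)) := by
      push_cast
      rw [mul_one_div, inv_eq_one_div, div_le_div_iff₀ (by linarith) (by positivity)]
      nlinarith [mul_le_mul_of_nonneg_left hd (show (0 : ℝ) ≤ b by linarith),
        mul_le_mul_of_nonneg_left hn' (show (0 : ℝ) ≤ b by linarith)]
    calc w b n * (n : ℝ)⁻¹ ≤ w b n * (4 * b * tf ε b (fun x => -Real.log x) (n + δ)) := by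
          refine mul_le_mul_of_nonneg_left (h2.trans ?_) (H.nonneg b n)
          gcongr
      _ = _ := by ring

theorem log_ident (H : KW w δ ε) {b : ℕ} (hb : 2 ≤ b) :
    So w δ b (tf ε b (fun x => -Real.log x)) = Real.log b := by
  have e1 : ∀ n : ℕ, w b n * (-Real.log (b * n) - -Real.log (b * n + b)) =
      w b n * (-Real.log n - -Real.log (n + 1)) := by
    refine H.congr_term b fun n hn => ?_
    have hn' : (n : ℝ) ≠ 0 := by positivity
    have hn1 : (n : ℝ) + 1 ≠ 0 := by positivity
    have hb0 : (b : ℝ) ≠ 0 := by positivity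
    rw [show (b : ℝ) * n + b = b * (n + 1) by ring, Real.log_mul hb0 hn', Real.log_mul hb0 hn1]
    ring
  have hA : Summable fun n : ℕ => w b n * (-Real.log n - -Real.log (n + 1)) := by
    refine Summable.of_norm_bounded (H.inv_summable hb) fun n => ?_
    rcases Nat.eq_zero_or_pos n with rfl | hn
    · simp [H.zero]
    · have hn' : (0 : ℝ) < n := by exact_mod_cast hn
      have h1 := Real.log_le_log hn' (show (n : ℝ) ≤ n + 1 by linarith)
      have h2 := log_sub_ge (x := (n : ℝ) + 1) (y := n) (by linarith) hn'
      rw [show (n : ℝ) - (n + 1) = -1 by ring, neg_div, one_div] at h2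
      rw [Real.norm_of_nonneg (mul_nonneg (H.nonneg b n) (by linarith))]
      exact mul_le_mul_of_nonneg_left (by linarith) (H.nonneg b n)
  have h := H.tsum_ident b hb (fun x => -Real.log x) hA (hA.congr fun n => (e1 n).symm)
    (H.log_summable hb)
  simp only [e1, Real.log_one] at h
  linarith

theorem final (H : KW w δ ε) (N : ℕ) :
    HasExp N (fun b => (b : ℝ) * (SS w b (fun n => (n : ℝ)⁻¹) - b * Real.log b)) := by
  obtain ⟨φ, hφ1, _, hφ3⟩ := analytic_phi 1
  obtain ⟨g, hg1, hg2⟩ := analytic_log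
  have hA := H.hasExp_A (H.main N)
  have hC := (H.main N 2 le_rfl _ (FC.cfun 1)).sub (HasExp.const N 1)
  have hT1 := ((H.taylor N hA (k := 2) le_rfl hφ1).pow_mul 1).mono (show N ≤ N + 1 by omega)
  have hT2 := (H.taylor N hA (k := 2) le_rfl hg1).const_mul ε
  refine (((hC.sub hT1).const_mul δ).add hT2).congr ?_
  filter_upwards [eventually_ge_atTop 2] with b hb
  have hb0 : (b : ℝ) ≠ 0 := by positivity
  have hCi := H.C_ident (j := 1) le_rfl hφ3 b hb
  set T1 := So w δ b (fun m => ((m : ℝ)⁻¹) ^ 2 * φ (ε * (b : ℝ)⁻¹ * (m : ℝ)⁻¹)) with hT1'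
  have e1 : (SS w b (cfun 1) - 1) - ((b : ℝ)⁻¹) ^ 1 * T1 = b * (SS w b (cfun 1) - 1) := by
    have : SS w b (cfun 1) - 1 = (b : ℝ)⁻¹ * (SS w b (cfun 1) - 1 - (b : ℝ)⁻¹ * T1) := by
      norm_num at hCi
      linear_combination hCi
    rw [pow_one]
    conv_rhs => rw [this]
    rw [mul_inv_cancel_left₀ hb0]
  have hinv := H.inv_summable hb
  have hc1 := H.summable b ((FC.cfun 1).summable le_rfl)
  -- the shifted harmonic sum
  have e2 : (SS w b (fun n => (n : ℝ)⁻¹)) = δ * (SS w b (cfun 1) - 1) +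
      So w δ b (fun m => (m : ℝ)⁻¹) ∧
      Summable (fun n => w b n * (fun m : ℕ => (m : ℝ)⁻¹) (n + δ)) := by
    rcases H.hδ with ⟨h1, h2⟩ | ⟨h1, h2⟩
    · subst h1
      simp only [Nat.add_zero]
      refine ⟨?_, hinv⟩
      simp [SS, So]
    · subst h1
      have hs : Summable (fun n => w b n * (fun m : ℕ => (m : ℝ)⁻¹) (n + 1)) := by
        refine (hinv.sub hc1).congr fun n => ?_
        simp [cfun]; ring
      refine ⟨?_, hs⟩
      have : ∑' n, w b n * (n : ℝ)⁻¹ = ∑' n, w b n * cfun 1 n +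
          ∑' n, w b n * (fun m : ℕ => (m : ℝ)⁻¹) (n + 1) := by
        rw [← hc1.tsum_add hs]
        refine tsum_congr fun n => ?_
        simp [cfun]; ring
      simp only [SS, So, this]
      push_cast
      ring
  have e3 : ε * So w δ b (fun m => ((m : ℝ)⁻¹) ^ 2 * g (ε * (b : ℝ)⁻¹ * (m : ℝ)⁻¹)) =
      b * So w δ b (fun m => (m : ℝ)⁻¹) - b * (b * Real.log b) := by
    rw [← H.log_ident hb, ← So_const_mul, ← So_const_mul, ← So_const_mul, ← So_const_mul,
      ← So_sub b]
    · refine H.So_congr b fun m hm => ?_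
      have hm0 : (m : ℝ) ≠ 0 := by positivity
      have hb' : (2 : ℝ) ≤ b := by exact_mod_cast hb
      have hm' : (1 : ℝ) ≤ m := by exact_mod_cast hm
      have hbm : (2 : ℝ) ≤ b * m := by nlinarith
      have hε := H.eps_sq
      have hlow : -1 ≤ ε := by
        rcases H.hδ with ⟨_, h⟩ | ⟨_, h⟩ <;> rw [h] <;> norm_num
      have h4 := hg2 (ε * (b : ℝ)⁻¹ * (m : ℝ)⁻¹)
      have h5 : 1 + ε * (b : ℝ)⁻¹ * (m : ℝ)⁻¹ = (b * m + ε) / (b * m) := by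
        field_simp
      rw [h5, Real.log_div (by linarith) (by positivity)] at h4
      simp only [tf]
      have h6 : ((m : ℝ)⁻¹) ^ 2 * g (ε * (b : ℝ)⁻¹ * (m : ℝ)⁻¹) = (b : ℝ) ^ 2 *
          ((ε * (b : ℝ)⁻¹ * (m : ℝ)⁻¹) ^ 2 * g (ε * (b : ℝ)⁻¹ * (m : ℝ)⁻¹)) := by
        have : (ε * (b : ℝ)⁻¹ * (m : ℝ)⁻¹) ^ 2 = (ε * ε) * ((b : ℝ)⁻¹ * (m : ℝ)⁻¹) ^ 2 := by ring
        rw [this, hε]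
        field_simp
      rw [h6, ← h4]
      have h7 : ε * ((b : ℝ) ^ 2 * (ε * (b : ℝ)⁻¹ * (m : ℝ)⁻¹)) = b * (m : ℝ)⁻¹ := by
        have : ε * ((b : ℝ) ^ 2 * (ε * (b : ℝ)⁻¹ * (m : ℝ)⁻¹)) =
          (ε * ε) * (b * (b * (b : ℝ)⁻¹)) * (m : ℝ)⁻¹ := by ring
        rw [this, hε, mul_inv_cancel₀ hb0]; ring
      rw [mul_sub, mul_sub, h7]
      ring
    · refine (e2.2.mul_left (b : ℝ)).congr fun n => ?_
      exact mul_left_comm _ _ _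
    · refine ((H.log_summable hb).mul_left ((b : ℝ) * b)).congr fun n => ?_
      ring
  rw [e1, e3, e2.1]
  ring

end KW

/-- The indicator of positive integers avoiding the digit `e b` in base `b`. -/
noncomputable def kw (e : ℕ → ℕ) (b n : ℕ) : ℝ :=
  if n ≠ 0 ∧ ∀ d ∈ Nat.digits b n, d ∉ ({e b} : Finset ℕ) then 1 else 0

theorem kempnerSum_eq (e : ℕ → ℕ) (b : ℕ) :
    kempnerSum b {e b} = SS (kw e) b (fun n => (n : ℝ)⁻¹) := by
  unfold kempnerSum SS
  refine tsum_congr fun n => ?_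
  simp only [kw]
  split_ifs <;> simp

theorem kw_digit (e : ℕ → ℕ) {b d : ℕ} (hd : d < b) :
    kw e b d = if d = 0 ∨ d = e b then 0 else 1 := by
  unfold kw
  rcases Nat.eq_zero_or_pos d with rfl | h
  · simp
  · have : d ≠ 0 := by omega
    rw [Nat.digits_of_lt b d this hd]
    by_cases h2 : d = e b <;> simp [this, h2]

theorem kw_append (e : ℕ → ℕ) {b d n : ℕ} (hb : 2 ≤ b) (hd : d < b) (hn : 1 ≤ n) :
    kw e b (b * n + d) = kw e b n * if d = e b then 0 else 1 := by
  unfold kw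
  have hn0 : n ≠ 0 := by omega
  rw [add_comm (b * n) d, Nat.digits_add b (by omega) d n hd (Or.inr hn0)]
  have hb0 : b ≠ 0 := by omega
  by_cases h2 : d = e b <;> simp [hn0, hb0, h2]

theorem block_sum (h : ℝ → ℝ) (x : ℝ) {b e : ℕ} (he : e < b) :
    ∑ d ∈ Finset.range b, (if d = e then (0 : ℝ) else 1) * (h (x + d) - h (x + d + 1)) =
      h x - h (x + b) - (h (x + e) - h (x + e + 1)) := by
  have h1 : ∑ d ∈ Finset.range b, (h (x + d) - h (x + d + 1)) = h x - h (x + b) := by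
    have := Finset.sum_range_sub' (fun d : ℕ => h (x + d)) b
    simp only [Nat.cast_zero, add_zero, Nat.cast_add, Nat.cast_one, ← add_assoc] at this
    exact this
  have h2 : ∑ d ∈ Finset.range b, (if d = e then h (x + d) - h (x + d + 1) else 0) =
      h (x + e) - h (x + e + 1) := by
    rw [Finset.sum_ite_eq' (Finset.range b) e (fun d : ℕ => h (x + d) - h (x + d + 1))]
    simp [he]
  rw [← h1, ← h2, ← Finset.sum_sub_distrib]
  refine Finset.sum_congr rfl fun d _ => ?_
  split_ifs <;> ring

theorem kw_KW (e : ℕ → ℕ) (δ : ℕ) (ε : ℝ)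
    (hδ : (δ = 0 ∧ ε = 1 ∧ e = fun _ => 0) ∨ (δ = 1 ∧ ε = -1 ∧ e = fun b => b - 1)) :
    KW (kw e) δ ε where
  hδ := by tauto
  zero b := by simp [kw]
  nonneg b n := by unfold kw; split_ifs <;> norm_num
  le_one b n := by unfold kw; split_ifs <;> norm_num
  one b n h1 h2 := by
    rw [kw_digit e (by omega : n < b), if_neg]
    rcases hδ with ⟨_, _, h⟩ | ⟨_, _, h⟩ <;> rw [h] <;> simp only <;> omega
  ident b hb h L hL := by
    have heb : e b < b := by
      rcases hδ with ⟨_, _, h⟩ | ⟨_, _, h⟩ <;> rw [h] <;> simp only <;> omega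
    induction L, hL using Nat.le_induction with
    | base =>
      have h0 : kw e b 0 = 0 := by simp [kw]
      simp only [mul_one, Finset.sum_range_one, h0, zero_mul, add_zero]
      have hbs := block_sum h 0 heb
      simp only [zero_add] at hbs
      have hterm : ∑ n ∈ Finset.range b, kw e b n * (h n - h (n + 1)) =
          ∑ d ∈ Finset.range b, (if d = e b then (0 : ℝ) else 1) * (h d - h (d + 1)) -
          (if 0 = e b then (0 : ℝ) else 1) * (h 0 - h 1) := by
        have h1 : (0 : ℕ) ∈ Finset.range b := by simp; omega
        rw [← Finset.add_sum_erase _ _ h1, ← Finset.add_sum_erase _ _ h1, h0]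
        simp only [Nat.cast_zero, zero_add, zero_mul, add_sub_cancel_left]
        refine Finset.sum_congr rfl fun d hd => ?_
        simp only [Finset.mem_erase, Finset.mem_range] at hd
        rw [kw_digit e hd.2]
        simp [hd.1]
      rw [hterm, hbs]
      rcases hδ with ⟨h1, h2, h3⟩ | ⟨h1, h2, h3⟩
      · simp [h1, h3]
      · have hb1 : (0 : ℕ) ≠ b - 1 := by omega
        have hc : ((b - 1 : ℕ) : ℝ) = b - 1 := by
          push_cast [Nat.cast_sub (show 1 ≤ b by omega)]; ring
        simp only [h1, h2, h3, tf, if_neg hb1, hc]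
        simp [sub_eq_add_neg]
        ring
    | succ L hL ih =>
      have hstep : ∑ d ∈ Finset.range b, kw e b (b * L + d) *
          (h ((b * L + d : ℕ) : ℝ) - h ((b * L + d : ℕ) + 1)) =
          kw e b L * (h (b * L) - h (b * L + b)) - kw e b L * tf ε b h (L + δ) := by
        have hbs := block_sum h (b * L) heb
        have : ∑ d ∈ Finset.range b, kw e b (b * L + d) *
          (h ((b * L + d : ℕ) : ℝ) - h ((b * L + d : ℕ) + 1)) =
          kw e b L * ∑ d ∈ Finset.range b, (if d = e b then (0 : ℝ) else 1) *
            (h (b * L + d) - h (b * L + d + 1)) := by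
          rw [Finset.mul_sum]
          refine Finset.sum_congr rfl fun d hd => ?_
          rw [kw_append e hb (Finset.mem_range.mp hd) hL]
          push_cast
          ring
        rw [this, hbs]
        rcases hδ with ⟨h1, h2, h3⟩ | ⟨h1, h2, h3⟩
        · simp [h1, h2, h3, tf]; ring
        · have hc : ((b - 1 : ℕ) : ℝ) = b - 1 := by
            push_cast [Nat.cast_sub (show 1 ≤ b by omega)]; ring
          simp only [h1, h2, h3, tf, hc]
          push_cast
          rw [show (b : ℝ) * L + (b - 1) + 1 = b * (L + 1) by ring,
            show (b : ℝ) * L + (b - 1) = b * (L + 1) + -1 by ring,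
            show (b : ℝ) * L + b = b * (L + 1) by ring]
          ring
      rw [mul_add, mul_one, Finset.sum_range_add, ih, hstep, Finset.sum_range_succ,
        Finset.sum_range_succ]
      ring

theorem expansion_of_KW (e : ℕ → ℕ) (δ : ℕ) (ε : ℝ) (H : KW (kw e) δ ε) :
    ∃ a : ℕ → ℝ, ∀ M : ℕ, ∃ C > (0 : ℝ), ∃ B : ℕ, ∀ b : ℕ, B ≤ b →
      |kempnerSum b {e b} - (b : ℝ) * Real.log b
          - ∑ m ∈ Finset.Icc 1 M, a m / (b : ℝ) ^ m| ≤ C / (b : ℝ) ^ (M + 1) := by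
  obtain ⟨a, ha⟩ := HasExp.full H.final
  refine ⟨fun m => a (m - 1), fun M => ?_⟩
  obtain ⟨C, hC⟩ := (ha M).bound
  obtain ⟨B, hB⟩ := eventually_atTop.mp hC
  refine ⟨|C| + 1, by positivity, B + 1, fun b hb => ?_⟩
  have hb0 : (0 : ℝ) < b := by
    have : 0 < b := by omega
    exact_mod_cast this
  have h1 := hB b (by omega)
  rw [Real.norm_eq_abs, Real.norm_of_nonneg (by positivity)] at h1
  rw [kempnerSum_eq]
  have e1 : ∑ m ∈ Finset.Icc 1 M, a (m - 1) / (b : ℝ) ^ m =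
      (b : ℝ)⁻¹ * ∑ m ∈ Finset.range M, a m * ((b : ℝ)⁻¹) ^ m := by
    clear hC hB h1
    induction M with
    | zero => simp
    | succ M ih =>
      rw [Finset.sum_Icc_succ_top (by omega), ih, Finset.sum_range_succ, mul_add]
      congr 1
      rw [Nat.add_sub_cancel, inv_pow]
      field_simp
      ring
  rw [e1]
  set S := ∑ m ∈ Finset.range M, a m * ((b : ℝ)⁻¹) ^ m
  set K := SS (kw e) b (fun n => (n : ℝ)⁻¹)
  have e2 : K - b * Real.log b - (b : ℝ)⁻¹ * S =
      (b : ℝ)⁻¹ * (b * (K - b * Real.log b) - S) := by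
    field_simp
  rw [e2, abs_mul, abs_of_pos (inv_pos.mpr hb0)]
  calc _ ≤ (b : ℝ)⁻¹ * (C * ((b : ℝ)⁻¹) ^ M) := by gcongr
    _ ≤ (b : ℝ)⁻¹ * ((|C| + 1) * ((b : ℝ)⁻¹) ^ M) := by
        gcongr
        linarith [le_abs_self C]
    _ = _ := by
        rw [inv_pow]
        field_simp
        ring

theorem kempner_full_asymptotic_expansion :
    ∃ a a' : ℕ → ℝ, ∀ M : ℕ, 1 ≤ M →
      ∃ C > (0 : ℝ), ∃ B : ℕ, ∀ b : ℕ, B ≤ b →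
        |kempnerSum b {0} - (b : ℝ) * Real.log b
          - ∑ m ∈ Finset.Icc 1 M, a m / (b : ℝ) ^ m| ≤ C / (b : ℝ) ^ (M + 1) ∧
        |kempnerSum b {b - 1} - (b : ℝ) * Real.log b
          - ∑ m ∈ Finset.Icc 1 M, a' m / (b : ℝ) ^ m| ≤ C / (b : ℝ) ^ (M + 1) := by
  obtain ⟨a, ha⟩ := expansion_of_KW (fun _ => 0) 0 1 (kw_KW _ 0 1 (Or.inl ⟨rfl, rfl, rfl⟩))
  obtain ⟨a', ha'⟩ := expansion_of_KW (fun b => b - 1) 1 (-1)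
    (kw_KW _ 1 (-1) (Or.inr ⟨rfl, rfl, rfl⟩))
  refine ⟨a, a', fun M _ => ?_⟩
  obtain ⟨C, hC, B, hB⟩ := ha M
  obtain ⟨C', hC', B', hB'⟩ := ha' M
  refine ⟨C + C', by positivity, max B B', fun b hb => ⟨?_, ?_⟩⟩
  · refine (hB b (le_trans (le_max_left _ _) hb)).trans ?_
    gcongr
    linarith
  · refine (hB' b (le_trans (le_max_right _ _) hb)).trans ?_
    gcongr
    linarith
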